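/- arXiv:2502.03348 — 2 statements merged into one kernel-verified Lean document; each statement's English description precedes it below -/
import Mathlib

section
/- Let m be even and u = (x_1, x_2, x_3) in Z_m^3 with x_1+x_2+x_3 ≡ 0 mod m and not all x_i equal. Then either Per(u) = 6, or Per(u) = 3 and each x_i lies in {0, m/2}. -/
def ducci {m : ℕ} (u : Fin 3 → ZMod m) : Fin 3 → ZMod m :=
  fun i => u i + u (i + 1)

/-! On triples of sum zero, the square of the Ducci map `D` is the cyclic shift and its cube is
negation. Hence the period divides `6`, it does not divide `2` because only constant triples are
fixed by the shift, and it can be `3` only when `-u = u`, which in `ZMod m` forces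
every entry to be `0` or `m / 2`. -/

/-- The Ducci map on triples with entries in an arbitrary additive type; `ducci` is the case
`A = ZMod m`, by definition. -/
def ducciMap {A : Type*} [Add A] (u : Fin 3 → A) : Fin 3 → A :=
  fun i => u i + u (i + 1)

open Function

section AddCommMonoid

variable {A : Type*} [AddCommMonoid A] {u : Fin 3 → A}

theorem add_add_cyclic_eq_zero (hsum : u 0 + u 1 + u 2 = 0) (i : Fin 3) :
    u i + u (i + 1) + u (i + 1 + 1) = 0 := by
  rw [← hsum]
  fin_cases i
  · rfl
  · exact (add_rotate (u 0) (u 1) (u 2)).symm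
  · exact add_rotate (u 2) (u 0) (u 1)

theorem iterate_two_ducciMap (hsum : u 0 + u 1 + u 2 = 0) :
    ducciMap^[2] u = fun i => u (i + 1) := by
  funext i
  calc ducciMap^[2] u i = u (i + 1) + (u i + u (i + 1) + u (i + 1 + 1)) := by
        simp only [iterate_succ_apply, iterate_zero_apply, ducciMap]
        abel
    _ = u (i + 1) := by rw [add_add_cyclic_eq_zero hsum, add_zero]

theorem eq_of_isPeriodicPt_ducciMap_two (hsum : u 0 + u 1 + u 2 = 0)
    (h : IsPeriodicPt ducciMap 2 u) : u 0 = u 1 ∧ u 1 = u 2 := by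
  have hshift : (fun i => u (i + 1)) = u := (iterate_two_ducciMap hsum).symm.trans h
  exact ⟨(congrFun hshift 0).symm, (congrFun hshift 1).symm⟩

end AddCommMonoid

section AddCommGroup

variable {A : Type*} [AddCommGroup A] {u : Fin 3 → A}

theorem iterate_three_ducciMap (hsum : u 0 + u 1 + u 2 = 0) : ducciMap^[3] u = -u := by
  rw [iterate_succ_apply', iterate_two_ducciMap hsum]
  funext i
  refine eq_neg_of_add_eq_zero_right ?_
  rw [ducciMap, ← add_assoc, add_add_cyclic_eq_zero hsum]

theorem isPeriodicPt_ducciMap_six (hsum : u 0 + u 1 + u 2 = 0) : IsPeriodicPt ducciMap 6 u := by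
  have hsum_neg : (-u) 0 + (-u) 1 + (-u) 2 = 0 := by
    simp only [Pi.neg_apply, ← neg_add, hsum, neg_zero]
  calc ducciMap^[3 + 3] u = ducciMap^[3] (-u) := by
        rw [iterate_add_apply, iterate_three_ducciMap hsum]
    _ = u := by rw [iterate_three_ducciMap hsum_neg, neg_neg]

theorem two_nsmul_eq_zero_of_isPeriodicPt_ducciMap_three (hsum : u 0 + u 1 + u 2 = 0)
    (h : IsPeriodicPt ducciMap 3 u) : 2 • u = 0 := by
  have hneg : -u = u := (iterate_three_ducciMap hsum).symm.trans h
  rwa [two_nsmul, ← neg_eq_iff_add_eq_zero]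

theorem ducci_period_of_even_general (hsum : u 0 + u 1 + u 2 = 0)
    (hne : ¬ (u 0 = u 1 ∧ u 1 = u 2)) :
    minimalPeriod ducciMap u = 6 ∨ (minimalPeriod ducciMap u = 3 ∧ 2 • u = 0) := by
  have hdvd_six : minimalPeriod ducciMap u ∣ 6 := (isPeriodicPt_ducciMap_six hsum).minimalPeriod_dvd
  have hndvd_two : ¬ minimalPeriod ducciMap u ∣ 2 := fun h =>
    hne (eq_of_isPeriodicPt_ducciMap_two hsum (isPeriodicPt_iff_minimalPeriod_dvd.2 h))
  have hcases : ∀ d ∈ Nat.divisors 6, ¬ d ∣ 2 → d = 6 ∨ d = 3 := by decide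
  refine (hcases _ (Nat.mem_divisors.2 ⟨hdvd_six, by decide⟩) hndvd_two).imp_right fun hthree => ?_
  exact ⟨hthree, two_nsmul_eq_zero_of_isPeriodicPt_ducciMap_three hsum
    (isPeriodicPt_iff_minimalPeriod_dvd.2 hthree.dvd)⟩

end AddCommGroup

theorem eq_zero_or_eq_half_of_two_nsmul_eq_zero {m : ℕ} {a : ZMod m} (h : 2 • a = 0) :
    a = 0 ∨ a = ((m / 2 : ℕ) : ZMod m) := by
  have hneg : -a = a := by rwa [neg_eq_iff_add_eq_zero, ← two_nsmul]
  refine or_iff_not_imp_left.2 fun ha => ?_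
  have hval : 2 * a.val = m := ((ZMod.neg_eq_self_iff a).1 hneg).resolve_left ha
  have hval_ne : a.val ≠ 0 := (ZMod.val_ne_zero a).2 ha
  have : NeZero m := ⟨by omega⟩
  have hhalf : m / 2 = a.val := by omega
  rw [hhalf, ZMod.natCast_zmod_val]

theorem ducci_period_of_even (m : ℕ) (hm : Even m) (u : Fin 3 → ZMod m)
    (hsum : u 0 + u 1 + u 2 = 0)
    (hne : ¬ (u 0 = u 1 ∧ u 1 = u 2)) :
    sInf {β : ℕ | 0 < β ∧ ducci^[β] u = u} = 6 ∨
    (sInf {β : ℕ | 0 < β ∧ ducci^[β] u = u} = 3 ∧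
      ∀ i, u i = 0 ∨ u i = ((m / 2 : ℕ) : ZMod m)) := by
  have hper : sInf {β : ℕ | 0 < β ∧ ducci^[β] u = u} = minimalPeriod ducci u :=
    minimalPeriod_eq_sInf_n_pos_IsPeriodicPt.symm
  rw [hper]
  exact (ducci_period_of_even_general hsum hne).imp_right <| And.imp_right fun htwo i =>
    eq_zero_or_eq_half_of_two_nsmul_eq_zero (congrFun htwo i)
end

section
/- With a_r, b_r, c_r the integer Ducci coefficients for n = 3 (a_0 = 1, b_0 = c_0 = 0, a_{r+1} = a_r + c_r, b_{r+1} = b_r + a_r, c_{r+1} = c_r + b_r), the following hold: if r ≡ 0 mod 6 then a_r = b_r + 1 = c_r + 1; if r ≡ 1 mod 6 then c_r = a_r − 1 = b_r − 1; if r ≡ 2 mod 6 then b_r = a_r + 1 = c_r + 1; if r ≡ 3 mod 6 then a_r = b_r − 1 = c_r − 1; if r ≡ 4 mod 6 then c_r = a_r + 1 = b_r + 1; if r ≡ 5 mod 6 then b_r = a_r − 1 = c_r − 1. -/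
/-!
Arrange the three sequences as one sequence `u` of triples indexed by `ZMod 3`, so that
`u (r + 1) i = u r i + u r (i - 1)`. The right-hand side is the sum of the whole triple `u r` minus
the missing entry `u r (i + 1)`. Hence, modulo constant triples, one step is a cyclic shift followed
by a change of sign: the exceptional entry of `(g, 0, 0)` moves back by one index and its deviation
`g` from the other two entries is negated. After `r` steps the exceptional entry has index
`-r mod 3` and deviation `(-1) ^ r • g`, so the pattern depends only on `r mod 6`.
-/

theorem sum_zmod_three_eq {M : Type*} [AddCommMonoid M] (f : ZMod 3 → M) (i : ZMod 3) :
    ∑ k, f k = f i + f (i - 1) + f (i + 1) := by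
  have sum_eq : ∑ k, f k = f 0 + f 1 + f 2 := Fin.sum_univ_three f
  rw [sum_eq]
  fin_cases i
  · exact (by abel : f 0 + f 1 + f 2 = f 0 + f 2 + f 1)
  · exact (by abel : f 0 + f 1 + f 2 = f 1 + f 0 + f 2)
  · exact (by abel : f 0 + f 1 + f 2 = f 2 + f 1 + f 0)

section DucciTriple

variable {G : Type*} [AddCommGroup G] {u : ℕ → ZMod 3 → G}
  (hu : ∀ r i, u (r + 1) i = u r i + u r (i - 1))

include hu

theorem ducci_succ_eq_sum_sub (r : ℕ) (i : ZMod 3) :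
    u (r + 1) i = ∑ k, u r k - u r (i + 1) := by
  rw [hu, sum_zmod_three_eq _ i, add_sub_cancel_right]

theorem ducci_sub_eq_neg_one_pow_zsmul (r : ℕ) (i j : ZMod 3) :
    u r i - u r j = (-1 : ℤ) ^ r • (u 0 (i + r) - u 0 (j + r)) := by
  induction r generalizing i j with
  | zero => simp
  | succ r ih =>
    calc u (r + 1) i - u (r + 1) j
        = -(u r (i + 1) - u r (j + 1)) := by
          rw [ducci_succ_eq_sum_sub hu, ducci_succ_eq_sum_sub hu]
          abel
      _ = (-1 : ℤ) ^ (r + 1) • (u 0 (i + (r + 1 : ℕ)) - u 0 (j + (r + 1 : ℕ))) := by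
          rw [ih, pow_succ, mul_neg_one, neg_smul, Nat.cast_succ, add_comm (r : ZMod 3),
            add_assoc, add_assoc]

theorem ducci_neg_index_eq_add {g : G} (h0 : u 0 = Pi.single 0 g) (r : ℕ) {j : ZMod 3}
    (hj : j ≠ -r) : u r (-r) = u r j + (-1 : ℤ) ^ r • g := by
  have hj' : j + r ≠ 0 := mt eq_neg_of_add_eq_zero_left hj
  rw [← sub_eq_iff_eq_add', ducci_sub_eq_neg_one_pow_zsmul hu, h0, neg_add_cancel,
    Pi.single_eq_same, Pi.single_eq_of_ne hj', sub_zero]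

theorem ducci_neg_index_eq_add_of_mod_six {g : G} (h0 : u 0 = Pi.single 0 g) {r k : ℕ}
    (hr : r % 6 = k) {j : ZMod 3} (hj : j ≠ -k) : u r (-k) = u r j + (-1 : ℤ) ^ k • g := by
  have cast_eq : (r : ZMod 3) = k := (ZMod.natCast_eq_natCast_iff' r k 3).2 (by omega)
  have sign_eq : (-1 : ℤ) ^ r = (-1) ^ k := by
    rw [neg_one_pow_eq_pow_mod_two, neg_one_pow_eq_pow_mod_two (n := k)]
    congr 1
    omega
  rw [← cast_eq] at hj ⊢
  rw [ducci_neg_index_eq_add hu h0 r hj, sign_eq]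

end DucciTriple

theorem ducci_coeff_relations_n3_general {G : Type*} [AddCommGroup G] (g : G) (a b c : ℕ → G)
    (ha0 : a 0 = g) (hb0 : b 0 = 0) (hc0 : c 0 = 0)
    (ha : ∀ r, a (r + 1) = a r + c r)
    (hb : ∀ r, b (r + 1) = b r + a r)
    (hc : ∀ r, c (r + 1) = c r + b r) (r : ℕ) :
    (r % 6 = 0 → a r = b r + g ∧ a r = c r + g) ∧
    (r % 6 = 1 → c r = a r - g ∧ c r = b r - g) ∧
    (r % 6 = 2 → b r = a r + g ∧ b r = c r + g) ∧
    (r % 6 = 3 → a r = b r - g ∧ a r = c r - g) ∧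
    (r % 6 = 4 → c r = a r + g ∧ c r = b r + g) ∧
    (r % 6 = 5 → b r = a r - g ∧ b r = c r - g) := by
  let u : ℕ → ZMod 3 → G := fun r ↦ ![a r, b r, c r]
  have hu : ∀ r i, u (r + 1) i = u r i + u r (i - 1) := by
    intro r i
    fin_cases i
    exacts [ha r, hb r, hc r]
  have h0 : u 0 = Pi.single 0 g := by
    ext i
    fin_cases i
    exacts [ha0, hb0, hc0]
  have eq_add {k : ℕ} {j : ZMod 3} (h : r % 6 = k) (hk : Even k := by decide)
      (hj : j ≠ -k := by decide) : u r (-k) = u r j + g := by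
    simpa only [hk.neg_one_pow, one_smul] using ducci_neg_index_eq_add_of_mod_six hu h0 h hj
  have eq_sub {k : ℕ} {j : ZMod 3} (h : r % 6 = k) (hk : Odd k := by decide)
      (hj : j ≠ -k := by decide) : u r (-k) = u r j - g := by
    simpa only [hk.neg_one_pow, neg_smul, one_smul, ← sub_eq_add_neg] using
      ducci_neg_index_eq_add_of_mod_six hu h0 h hj
  exact ⟨fun h ↦ ⟨eq_add (j := 1) h, eq_add (j := 2) h⟩,
    fun h ↦ ⟨eq_sub (j := 0) h, eq_sub (j := 1) h⟩,
    fun h ↦ ⟨eq_add (j := 0) h, eq_add (j := 2) h⟩,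
    fun h ↦ ⟨eq_sub (j := 1) h, eq_sub (j := 2) h⟩,
    fun h ↦ ⟨eq_add (j := 0) h, eq_add (j := 1) h⟩,
    fun h ↦ ⟨eq_sub (j := 0) h, eq_sub (j := 2) h⟩⟩

theorem ducci_coeff_relations_n3 (a b c : ℕ → ℤ)
    (ha0 : a 0 = 1) (hb0 : b 0 = 0) (hc0 : c 0 = 0)
    (ha : ∀ r, a (r + 1) = a r + c r)
    (hb : ∀ r, b (r + 1) = b r + a r)
    (hc : ∀ r, c (r + 1) = c r + b r) (r : ℕ) :
    (r % 6 = 0 → a r = b r + 1 ∧ a r = c r + 1) ∧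
    (r % 6 = 1 → c r = a r - 1 ∧ c r = b r - 1) ∧
    (r % 6 = 2 → b r = a r + 1 ∧ b r = c r + 1) ∧
    (r % 6 = 3 → a r = b r - 1 ∧ a r = c r - 1) ∧
    (r % 6 = 4 → c r = a r + 1 ∧ c r = b r + 1) ∧
    (r % 6 = 5 → b r = a r - 1 ∧ b r = c r - 1) :=
  ducci_coeff_relations_n3_general 1 a b c ha0 hb0 hc0 ha hb hc r
end
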